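/- Let b be a prime, s, α, m ∈ ℕ with α ≥ 2, and let Q ⊂ [0,1)^{αs} be an order 1 digital (t', m, αs)-net over F_b with 0 ≤ t' ≤ m. Then the digital net P ⊂ [0,1)^s obtained by digit interlacing composition with factor α is an order α digital (t, m, s)-net over F_b with t = α · min{m, t' + ⌊s(α−1)/2⌋}. In particular, P satisfies μ_α(P) ≥ max{0, α(m − t' − ⌊s(α−1)/2⌋)} + 1. -/

import Mathlib

/-!
Row `α h + i` of the interlaced matrix `D_j` is row `h` of the generating matrix of `Q` numbered
`α j + i`, so a choice of rows of the `D_j` is a choice of rows of the generating matrices of `Q`,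
and it suffices that the 1-based largest chosen indices `d_{j,i}` of the latter satisfy
`∑ d_{j,i} ≤ m - t'`. For fixed `j` they come from `α` distinct rows of `D_j`, one from each residue
class modulo `α`, with 1-based indices `α d_{j,i} - (α - 1 - i)`. The sum of these is at most the
sum of the `α` largest chosen row indices of `D_j`. Summing over `j` and dividing by `α` loses
`s (α - 1) / 2`, which may be rounded down because `∑ d_{j,i}` is an integer.

For the Dick metric, a nonzero element of the dual net is a nontrivial linear relation among the
rows indexed by its nonzero digits, so these rows cannot satisfy the order `α` condition.
-/

open scoped BigOperators

/-- The `i`-th digit (starting from `i = 0`) of the `b`-adic expansion of `k`. -/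
def bdigit (b k i : ℕ) : ℕ := k / b ^ i % b

/-- The set of indices of nonzero `b`-adic digits of `k`. -/
def bsupp (b k : ℕ) : Finset ℕ := (Finset.range (k + 1)).filter fun i => bdigit b k i ≠ 0

/-- The Hamming metric `κ(k)`: the number of nonzero `b`-adic digits of `k`. -/
def hamming (b k : ℕ) : ℕ := (bsupp b k).card

/-- The Dick metric `μ_α(k)`: the sum of the `min(v, α)` largest exponents-plus-one
`a_1 > a_2 > ⋯` of the nonzero `b`-adic digits of `k`. -/
def dick (b α k : ℕ) : ℕ := ((((bsupp b k).sort (· ≤ ·)).reverse.take α).map (· + 1)).sum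

/-- Digitwise addition `k ⊕ l` modulo `b` of the `b`-adic digits. -/
def dadd (b k l : ℕ) : ℕ :=
  ∑ i ∈ Finset.range (k + l + 1), (bdigit b k i + bdigit b l i) % b * b ^ i

/-- Digitwise subtraction `k ⊖ l` modulo `b` of the `b`-adic digits. -/
def dsub (b k l : ℕ) : ℕ :=
  ∑ i ∈ Finset.range (k + l + 1), (bdigit b k i + (b - bdigit b l i)) % b * b ^ i

/-- Hamming metric of a vector: sum over coordinates. -/
def hammingVec (b : ℕ) {s : ℕ} (k : Fin s → ℕ) : ℕ := ∑ j, hamming b (k j)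

/-- Dick metric of a vector: sum over coordinates. -/
def dickVec (b α : ℕ) {s : ℕ} (k : Fin s → ℕ) : ℕ := ∑ j, dick b α (k j)

/-- The column vector of the first `n` `b`-adic digits of `k`, as a vector over `F_b = ZMod b`. -/
def trv (b n : ℕ) (k : ℕ) : Fin n → ZMod b := fun i => (bdigit b k i.1 : ZMod b)

/-- The dual net `P⊥` of the digital net with generating matrices `C`. -/
def dualNet (b : ℕ) {s n m : ℕ} (C : Fin s → Matrix (Fin n) (Fin m) (ZMod b)) :
    Set (Fin s → ℕ) :=
  {k | (∀ j, k j < b ^ n) ∧ ∑ j, ((C j).transpose).mulVec (trv b n (k j)) = 0}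

/-- The dual net `P∞⊥` of the digital net with generating matrices `C` (no upper bound
on the components of `k`). -/
def dualNetInf (b : ℕ) {s n m : ℕ} (C : Fin s → Matrix (Fin n) (Fin m) (ZMod b)) :
    Set (Fin s → ℕ) :=
  {k | ∑ j, ((C j).transpose).mulVec (trv b n (k j)) = 0}

/-- The `h`-th point of the digital net generated by the matrices `C` over `ZMod b`:
its `j`-th coordinate is `∑_{i=1}^n ξ_i b^{-i}` with `(ξ_1,…,ξ_n)ᵀ = C_j · (η_0,…,η_{m-1})ᵀ`,
where `η` are the `b`-adic digits of `h`. -/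
noncomputable def netPoint (b : ℕ) {s n m : ℕ} (C : Fin s → Matrix (Fin n) (Fin m) (ZMod b))
    (h : ℕ) : Fin s → ℝ :=
  fun j => ∑ i : Fin n,
    (((C j).mulVec (fun v : Fin m => (bdigit b h v.1 : ZMod b)) i).val : ℝ) / (b : ℝ) ^ (i.1 + 1)

/-- Sum of the `α` largest elements of a finite set of (0-based) row indices, counted
1-based, i.e. each index `i` contributes `i + 1`. -/
def topSum (α : ℕ) (R : Finset ℕ) : ℕ := (((R.sort (· ≤ ·)).reverse.take α).map (· + 1)).sum

/-- The digital net with generating matrices `C_1,…,C_s ∈ F_b^{n×m}` is an order `α`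
digital `(t,m,s)`-net: for every choice of rows `i_{j,v_j} < ⋯ < i_{j,1}` from each `C_j`
such that the 1-based indices of the `min(α, v_j)` largest chosen rows of each matrix sum
to at most `αm - t`, the chosen rows are linearly independent over `F_b`. -/
def isOrderNet (b α t m : ℕ) {s n : ℕ} (C : Fin s → Matrix (Fin n) (Fin m) (ZMod b)) : Prop :=
  ∀ R : Fin s → Finset (Fin n),
    (∑ j, topSum α ((R j).image Fin.val)) ≤ α * m - t →
    LinearIndependent (ZMod b) fun p : Σ j : Fin s, {i : Fin n // i ∈ R j} => C p.1 p.2.1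

/-- The minimum Dick metric `μ_α(P)` of the digital net with generating matrices `C`,
namely the minimum of `μ_α(k)` over nonzero elements `k` of the dual net. -/
noncomputable def minDick (b α : ℕ) {s n m : ℕ}
    (C : Fin s → Matrix (Fin n) (Fin m) (ZMod b)) : ℕ :=
  sInf (dickVec b α '' {k | k ∈ dualNet b C ∧ k ≠ 0})

/-- The minimum Hamming metric `κ(P)` of the digital net with generating matrices `C`. -/
noncomputable def minHamming (b : ℕ) {s n m : ℕ}
    (C : Fin s → Matrix (Fin n) (Fin m) (ZMod b)) : ℕ :=
  sInf (hammingVec b '' {k | k ∈ dualNet b C ∧ k ≠ 0})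

/-- Dick's digit interlacing composition with interlacing factor `α` applied to the
generating matrices `C_1,…,C_{αs} ∈ F_b^{m×m}`: the resulting matrices
`D_1,…,D_s ∈ F_b^{αm×m}` are such that the (1-based) `(α(h-1)+i)`-th row of `D_j` is the
`h`-th row of `C_{α(j-1)+i}`. -/
def interlace {R : Type*} (α s m : ℕ) (C : Fin (α * s) → Matrix (Fin m) (Fin m) R) :
    Fin s → Matrix (Fin (α * m)) (Fin m) R :=
  fun j => Matrix.of fun r v =>
    C ⟨α * j.1 + r.1 % α, by
        have hα : 0 < α := by
          rcases Nat.eq_zero_or_pos α with h | h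
          · exact absurd r.2 (by simp [h])
          · exact h
        have h1 : α * (j.1 + 1) ≤ α * s := Nat.mul_le_mul_left α j.2
        have h2 : α * (j.1 + 1) = α * j.1 + α := by ring
        have h3 : r.1 % α < α := Nat.mod_lt _ hα
        omega⟩
      ⟨r.1 / α, by
        have hα : 0 < α := by
          rcases Nat.eq_zero_or_pos α with h | h
          · exact absurd r.2 (by simp [h])
          · exact h
        exact Nat.div_lt_of_lt_mul r.2⟩
      v

/-! ### Sums of the largest elements of a finite set -/

theorem sum_le_sum_take_of_sublist {M : Type*} [AddCommMonoid M] [PartialOrder M]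
    [CanonicallyOrderedAdd M] [IsOrderedAddMonoid M] {l l' : List M} (hl : l.Pairwise (· ≥ ·))
    (hsub : l'.Sublist l) {n : ℕ} (hn : l'.length ≤ n) : l'.sum ≤ (l.take n).sum := by
  induction l generalizing l' n with
  | nil => simp [List.sublist_nil.mp hsub]
  | cons a l ih =>
    rcases l' with _ | ⟨x, l'⟩
    · simp
    obtain ⟨n, rfl⟩ : ∃ k, n = k + 1 := Nat.exists_eq_succ_of_ne_zero (by grind)
    rw [List.pairwise_cons] at hl
    have hxa : x ≤ a := by
      rcases List.mem_cons.mp (hsub.subset List.mem_cons_self) with rfl | hx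
      exacts [le_rfl, hl.1 x hx]
    simpa using add_le_add hxa (ih hl.2 hsub.tail (by simpa using hn))

theorem sum_succ_le_topSum {α : ℕ} {S T : Finset ℕ} (hTS : T ⊆ S) (hT : T.card ≤ α) :
    ∑ x ∈ T, (x + 1) ≤ topSum α S := by
  have hsub : ((T.sort (· ≤ ·)).reverse.map (· + 1)).Sublist
      ((S.sort (· ≤ ·)).reverse.map (· + 1)) :=
    (List.sublist_of_subperm_of_pairwise
      (List.subperm_of_subset (T.sort_nodup _) fun x hx => by simpa using hTS (by simpa using hx))
      (T.pairwise_sort _) (S.pairwise_sort _)).reverse.map _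
  have hsorted : ((S.sort (· ≤ ·)).reverse.map (· + 1)).Pairwise (· ≥ ·) := by
    simp [List.pairwise_map, List.pairwise_reverse]
  calc ∑ x ∈ T, (x + 1) = ((T.sort (· ≤ ·)).reverse.map (· + 1)).sum := by
        rw [List.map_reverse, List.sum_reverse, ← List.sum_toFinset _ (T.sort_nodup _),
          Finset.sort_toFinset]
    _ ≤ (((S.sort (· ≤ ·)).reverse.map (· + 1)).take α).sum :=
        sum_le_sum_take_of_sublist hsorted hsub (by simpa using hT)
    _ = topSum α S := by rw [topSum, List.map_take]

theorem exists_subset_sum_succ_eq_topSum (α : ℕ) (S : Finset ℕ) :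
    ∃ T ⊆ S, T.card ≤ α ∧ ∑ x ∈ T, (x + 1) = topSum α S := by
  have hnodup : ((S.sort (· ≤ ·)).reverse.take α).Nodup :=
    (List.nodup_reverse.mpr (S.sort_nodup _)).sublist (List.take_sublist _ _)
  refine ⟨((S.sort (· ≤ ·)).reverse.take α).toFinset, fun x hx => ?_, ?_, ?_⟩
  · simpa using List.mem_of_mem_take (List.mem_toFinset.mp hx)
  · simp [List.toFinset_card_of_nodup hnodup]
  · rw [List.sum_toFinset _ hnodup, topSum]

theorem eq_empty_of_topSum_eq_zero {α : ℕ} {S : Finset ℕ} (hα : 0 < α) (h : topSum α S = 0) :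
    S = ∅ := by
  refine Finset.eq_empty_of_forall_notMem fun x hx => ?_
  have hx' : ∑ y ∈ {x}, (y + 1) ≤ topSum α S :=
    sum_succ_le_topSum (Finset.singleton_subset_iff.mpr hx) (by rwa [Finset.card_singleton])
  simp [h] at hx'

theorem sum_fin_sub_one_sub (α : ℕ) : ∑ i : Fin α, (α - 1 - i) = α * (α - 1) / 2 := by
  rw [Fin.sum_univ_eq_sum_range (fun i => α - 1 - i), Finset.sum_range_reflect (fun i => i),
    Finset.sum_range_id]

theorem mul_add_fin_div {α : ℕ} (h : ℕ) (i : Fin α) : (α * h + i) / α = h := by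
  rw [Nat.mul_add_div i.pos, Nat.div_eq_of_lt i.2, add_zero]

theorem mul_add_fin_mod {α : ℕ} (h : ℕ) (i : Fin α) : (α * h + i) % α = i := by
  rw [Nat.mul_add_mod, Nat.mod_eq_of_lt i.2]

theorem mul_sum_topSum_le (α β : ℕ) {S : Finset ℕ} {A : Fin α → Finset ℕ}
    (hA : ∀ i, ∀ h ∈ A i, α * h + i ∈ S) :
    α * ∑ i, topSum β (A i) ≤ topSum (α * β) S + β * (α * (α - 1) / 2) := by
  choose T hTA hcard hsum using fun i => exists_subset_sum_succ_eq_topSum β (A i)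
  let row : (_ : Fin α) × ℕ → ℕ := fun p => α * p.2 + p.1
  have hrow : row.Injective := by
    rintro ⟨i, h⟩ ⟨i', h'⟩ heq
    have hmod : i = i' := Fin.ext <| by
      simpa only [row, mul_add_fin_mod] using congrArg (· % α) heq
    have hdiv : h = h' := by simpa only [row, mul_add_fin_div] using congrArg (· / α) heq
    rw [hmod, hdiv]
  let U : Finset ℕ := (Finset.univ.sigma T).image row
  have hUS : U ⊆ S := by
    intro x hx
    obtain ⟨⟨i, h⟩, hp, rfl⟩ := Finset.mem_image.mp hx
    exact hA i h (hTA i (Finset.mem_sigma.mp hp).2)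
  have hU : U.card ≤ α * β := by
    rw [Finset.card_image_of_injective _ hrow, Finset.card_sigma]
    simpa using Finset.sum_le_sum fun i (_ : i ∈ Finset.univ) => hcard i
  calc α * ∑ i, topSum β (A i)
      = ∑ i, ∑ h ∈ T i, (row ⟨i, h⟩ + 1 + (α - 1 - i)) := by
        simp only [← hsum, Finset.mul_sum]
        refine Finset.sum_congr rfl fun i _ => Finset.sum_congr rfl fun h _ => ?_
        simp only [row, mul_add]
        omega
    _ = ∑ x ∈ U, (x + 1) + ∑ i, (T i).card * (α - 1 - i) := by
        simp only [U, Finset.sum_image hrow.injOn, Finset.sum_sigma, Finset.sum_add_distrib,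
          Finset.sum_const, smul_eq_mul, Finset.card_sigma, Finset.sum_mul]
    _ ≤ topSum (α * β) S + ∑ i : Fin α, β * (α - 1 - i) := by
        gcongr with i
        exacts [sum_succ_le_topSum hUS hU, hcard i]
    _ = topSum (α * β) S + β * (α * (α - 1) / 2) := by
        rw [← Finset.mul_sum, sum_fin_sub_one_sub]

/-! ### Nonzero digits -/

theorem bdigit_eq_zero_of_lt {b k i : ℕ} (hk : k < b ^ i) : bdigit b k i = 0 := by
  simp [bdigit, Nat.div_eq_of_lt hk]

theorem mem_bsupp {b k i : ℕ} (hb : 1 < b) : i ∈ bsupp b k ↔ bdigit b k i ≠ 0 := by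
  simp only [bsupp, Finset.mem_filter, Finset.mem_range, and_iff_right_iff_imp]
  intro hi
  by_contra! hki
  exact hi (bdigit_eq_zero_of_lt ((Nat.lt_of_succ_le hki).trans (Nat.lt_pow_self hb)))

theorem bdigit_log_ne_zero {b k : ℕ} (hb : 1 < b) (hk : k ≠ 0) :
    bdigit b k (Nat.log b k) ≠ 0 := by
  have hpos : 0 < b ^ Nat.log b k := Nat.pow_pos (by omega)
  have hlt : k / b ^ Nat.log b k < b := by
    rw [Nat.div_lt_iff_lt_mul hpos, ← pow_succ']
    exact Nat.lt_pow_succ_log_self hb k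
  rw [bdigit, Nat.mod_eq_of_lt hlt]
  exact (Nat.div_pos (Nat.pow_log_le_self b hk) hpos).ne'

theorem trv_apply_eq_zero_iff {b n k : ℕ} (hb : 0 < b) {i : Fin n} :
    trv b n k i = 0 ↔ bdigit b k i = 0 := by
  rw [trv, ZMod.natCast_eq_zero_iff]
  exact ⟨fun h => Nat.eq_zero_of_dvd_of_lt h (Nat.mod_lt _ hb), fun h => h ▸ dvd_zero b⟩

theorem eq_zero_of_trv_eq_zero {b n k : ℕ} (hb : 1 < b) (hk : k < b ^ n) (h : trv b n k = 0) :
    k = 0 := by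
  by_contra hk0
  exact bdigit_log_ne_zero hb hk0 <| (trv_apply_eq_zero_iff (by omega)).mp <|
    congrFun h ⟨Nat.log b k, Nat.log_lt_of_lt_pow hk0 hk⟩

/-- The row indices `i < n` at which `k` has a nonzero `b`-adic digit: the rows that occur in the
linear relation expressing that `k` belongs to a dual net. -/
def digitRows (b n k : ℕ) : Finset (Fin n) := {i | bdigit b k i ≠ 0}

theorem image_val_digitRows {b n k : ℕ} (hb : 1 < b) (hk : k < b ^ n) :
    (digitRows b n k).image Fin.val = bsupp b k := by
  ext i
  simp only [digitRows, Finset.mem_image, Finset.mem_filter_univ, mem_bsupp hb]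
  constructor
  · rintro ⟨i, hi, rfl⟩
    exact hi
  · intro hi
    have hin : i < n := by
      by_contra! hni
      exact hi (bdigit_eq_zero_of_lt (hk.trans_le (Nat.pow_le_pow_right (by omega) hni)))
    exact ⟨⟨i, hin⟩, hi, rfl⟩

theorem topSum_image_val_digitRows {b n k : ℕ} (α : ℕ) (hb : 1 < b) (hk : k < b ^ n) :
    topSum α ((digitRows b n k).image Fin.val) = dick b α k := by
  rw [image_val_digitRows hb hk, topSum, dick]

/-! ### Order `α` nets and their dual nets -/

theorem eq_zero_of_sum_mulVec_transpose_eq_zero {K ι κ μ : Type*} [CommRing K] [Fintype ι]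
    [Fintype κ] {C : ι → Matrix κ μ K} {R : ι → Finset κ}
    (hli : LinearIndependent K fun p : Σ j, {i // i ∈ R j} => C p.1 p.2.1) {x : ι → κ → K}
    (hx : ∀ j, ∀ i ∉ R j, x j i = 0) (hsum : ∑ j, (C j).transpose.mulVec (x j) = 0) :
    x = 0 := by
  have hrel : ∑ p : Σ j, {i // i ∈ R j}, x p.1 p.2.1 • C p.1 p.2.1 = 0 := by
    rw [← hsum, Fintype.sum_sigma]
    refine Finset.sum_congr rfl fun j _ => ?_
    rw [Matrix.mulVec_transpose, Matrix.vecMul_eq_sum,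
      Finset.sum_coe_sort (R j) fun i => x j i • C j i]
    refine Finset.sum_subset (Finset.subset_univ _) fun i _ hi => ?_
    rw [hx j i hi, zero_smul]
  ext j i
  by_cases hi : i ∈ R j
  · exact Fintype.linearIndependent_iff.mp hli _ hrel ⟨j, i, hi⟩
  · exact hx j i hi

theorem isOrderNet.lt_dickVec {b α t m s n : ℕ} (hb : 1 < b)
    {C : Fin s → Matrix (Fin n) (Fin m) (ZMod b)} (hC : isOrderNet b α t m C) {k : Fin s → ℕ}
    (hk : k ∈ dualNet b C) (hk0 : k ≠ 0) : α * m - t < dickVec b α k := by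
  obtain ⟨hlt, hsum⟩ := hk
  by_contra! hle
  have hli := hC (fun j => digitRows b n (k j)) <| by
    simpa only [topSum_image_val_digitRows α hb (hlt _), dickVec] using hle
  have hzero : (fun j => trv b n (k j)) = 0 :=
    eq_zero_of_sum_mulVec_transpose_eq_zero hli
      (fun j i hi => (trv_apply_eq_zero_iff (by omega)).mpr (by simpa [digitRows] using hi)) hsum
  exact hk0 (funext fun j => eq_zero_of_trv_eq_zero hb (hlt j) (congrFun hzero j))

theorem isOrderNet_of_mul_le {b α t m s n : ℕ} (hα : 0 < α) (ht : α * m ≤ t)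
    (C : Fin s → Matrix (Fin n) (Fin m) (ZMod b)) : isOrderNet b α t m C := by
  intro R hR
  have hsum : ∑ j, topSum α ((R j).image Fin.val) = 0 := by omega
  have hempty : ∀ j, R j = ∅ := fun j => Finset.image_eq_empty.mp <|
    eq_empty_of_topSum_eq_zero hα (Finset.sum_eq_zero_iff.mp hsum j (Finset.mem_univ j))
  have : IsEmpty (Σ j, {i // i ∈ R j}) := ⟨fun ⟨j, i, hi⟩ => by simp [hempty j] at hi⟩
  exact linearIndependent_empty_type

/-! ### Digit interlacing -/

/-- The numbering `(h, i) ↦ α h + i` of pairs. Digit interlacing uses it twice: for the generating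
matrices `C_{α j + i}` of `Q`, and for the rows `α h + i` of an interlaced matrix. -/
def interlaceEquiv (α n : ℕ) : Fin n × Fin α ≃ Fin (α * n) :=
  finProdFinEquiv.trans (finCongr (mul_comm n α))

theorem val_interlaceEquiv {α n : ℕ} (p : Fin n × Fin α) :
    (interlaceEquiv α n p : ℕ) = α * p.1 + p.2 := by
  simp [interlaceEquiv, add_comm]

theorem interlace_interlaceEquiv {K : Type*} {α s m : ℕ}
    (C : Fin (α * s) → Matrix (Fin m) (Fin m) K) (j : Fin s) (h : Fin m) (i : Fin α) :
    interlace α s m C j (interlaceEquiv α m (h, i)) = C (interlaceEquiv α s (j, i)) h := by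
  ext v
  simp only [interlace, Matrix.of_apply, val_interlaceEquiv, mul_add_fin_mod, mul_add_fin_div]
  exact congrArg (fun q => C q h v) (Fin.ext (val_interlaceEquiv (j, i)).symm)

/-- The rows of the generating matrices `C_q` of which the rows `R j` of the interlaced matrices
consist. -/
def deinterlaceRows {α s m : ℕ} (R : Fin s → Finset (Fin (α * m))) :
    Fin (α * s) → Finset (Fin m) := fun q =>
  {h | interlaceEquiv α m (h, ((interlaceEquiv α s).symm q).2) ∈ R ((interlaceEquiv α s).symm q).1}

theorem mem_deinterlaceRows {α s m : ℕ} {R : Fin s → Finset (Fin (α * m))} {j : Fin s}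
    {i : Fin α} {h : Fin m} :
    h ∈ deinterlaceRows R (interlaceEquiv α s (j, i)) ↔ interlaceEquiv α m (h, i) ∈ R j := by
  simp [deinterlaceRows]

theorem linearIndependent_interlace {K : Type*} [Semiring K] {α s m : ℕ}
    {C : Fin (α * s) → Matrix (Fin m) (Fin m) K} {R : Fin s → Finset (Fin (α * m))}
    (hli : LinearIndependent K
      fun p : Σ q, {h // h ∈ deinterlaceRows R q} => C p.1 p.2.1) :
    LinearIndependent K fun p : Σ j, {r // r ∈ R j} => interlace α s m C p.1 p.2.1 := by
  let e := (interlaceEquiv α m).symm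
  let f : (Σ j, {r // r ∈ R j}) → Σ q, {h // h ∈ deinterlaceRows R q} := fun p =>
    ⟨interlaceEquiv α s (p.1, (e p.2.1).2), (e p.2.1).1,
      mem_deinterlaceRows.mpr (by simp [e])⟩
  have hf : f.Injective := by
    rintro ⟨j, r, hr⟩ ⟨j', r', hr'⟩ heq
    have hq : (j, (e r).2) = (j', (e r').2) := (interlaceEquiv α s).injective (congrArg (·.1) heq)
    have hrow : (e r).1 = (e r').1 := congrArg (fun p => p.2.1) heq
    obtain ⟨rfl, hclass⟩ := Prod.mk.inj hq
    obtain rfl : r = r' := e.injective (Prod.ext hrow hclass)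
    rfl
  convert hli.comp f hf using 1
  ext p : 1
  simp only [Function.comp_apply, f, ← interlace_interlaceEquiv, Prod.mk.eta, e,
    Equiv.apply_symm_apply]

theorem mul_sum_topSum_deinterlaceRows_le {α s m : ℕ} (R : Fin s → Finset (Fin (α * m))) :
    α * ∑ q, topSum 1 ((deinterlaceRows R q).image Fin.val) ≤
      ∑ j, topSum α ((R j).image Fin.val) + s * (α * (α - 1) / 2) := by
  have hcoord : ∀ j,
      α * ∑ i, topSum 1 ((deinterlaceRows R (interlaceEquiv α s (j, i))).image Fin.val) ≤
        topSum α ((R j).image Fin.val) + α * (α - 1) / 2 := by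
    intro j
    have hmem : ∀ i : Fin α,
        ∀ h ∈ (deinterlaceRows R (interlaceEquiv α s (j, i))).image Fin.val,
          α * h + i ∈ (R j).image Fin.val := by
      intro i x hx
      obtain ⟨h, hh, rfl⟩ := Finset.mem_image.mp hx
      exact Finset.mem_image.mpr ⟨_, mem_deinterlaceRows.mp hh, val_interlaceEquiv _⟩
    simpa using mul_sum_topSum_le α 1 hmem
  rw [← Equiv.sum_comp (interlaceEquiv α s), Fintype.sum_prod_type, Finset.mul_sum]
  simpa [Finset.sum_add_distrib] using Finset.sum_le_sum fun j (_ : j ∈ Finset.univ) => hcoord j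

theorem le_add_half_of_mul_le {α s x y : ℕ} (hα : 0 < α)
    (h : α * x ≤ α * y + s * (α * (α - 1) / 2)) : x ≤ y + s * (α - 1) / 2 := by
  have heven : 2 * (α * (α - 1) / 2) = α * (α - 1) :=
    Nat.two_mul_div_two_of_even (Nat.even_mul_pred_self α)
  have hdouble : 2 * x ≤ 2 * y + s * (α - 1) := by
    refine Nat.le_of_mul_le_mul_left ?_ hα
    calc α * (2 * x) = 2 * (α * x) := by ring
      _ ≤ 2 * (α * y + s * (α * (α - 1) / 2)) := by gcongr
      _ = 2 * (α * y) + s * (2 * (α * (α - 1) / 2)) := by ring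
      _ = α * (2 * y + s * (α - 1)) := by rw [heven]; ring
  omega

theorem isOrderNet.interlace {b s α m t' : ℕ} (hα : 0 < α)
    {C : Fin (α * s) → Matrix (Fin m) (Fin m) (ZMod b)} (hQ : isOrderNet b 1 t' m C) :
    isOrderNet b α (α * min m (t' + s * (α - 1) / 2)) m (interlace α s m C) := by
  rcases le_total m (t' + s * (α - 1) / 2) with hle | hge
  · exact isOrderNet_of_mul_le hα (by rw [min_eq_left hle]) _
  intro R hR
  rw [min_eq_right hge, ← Nat.mul_sub] at hR
  refine linearIndependent_interlace (hQ _ ?_)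
  have hsum : ∑ q, topSum 1 ((deinterlaceRows R q).image Fin.val) ≤
      m - (t' + s * (α - 1) / 2) + s * (α - 1) / 2 :=
    le_add_half_of_mul_le hα ((mul_sum_topSum_deinterlaceRows_le R).trans (by gcongr))
  omega

theorem interlaced_order_net_general {b s α m t' : ℕ} (hb : 1 < b) (hα : 0 < α)
    {C : Fin (α * s) → Matrix (Fin m) (Fin m) (ZMod b)} (hQ : isOrderNet b 1 t' m C) :
    isOrderNet b α (α * min m (t' + s * (α - 1) / 2)) m (interlace α s m C) ∧
    ∀ k ∈ dualNet b (interlace α s m C), k ≠ 0 →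
      max 0 ((α : ℤ) * ((m : ℤ) - (t' : ℤ) - ((s * (α - 1) / 2 : ℕ) : ℤ))) + 1
        ≤ (dickVec b α k : ℤ) := by
  have hP := hQ.interlace hα
  refine ⟨hP, fun k hk hk0 => ?_⟩
  have hlt : α * (m - (t' + s * (α - 1) / 2)) < dickVec b α k := by
    simpa only [← Nat.mul_sub, tsub_min] using hP.lt_dickVec hb hk hk0
  have hmax : max 0 ((m : ℤ) - t' - (s * (α - 1) / 2 : ℕ)) =
      (m - (t' + s * (α - 1) / 2) : ℕ) := by omega
  rw [← mul_zero (α : ℤ), ← mul_max_of_nonneg _ _ (Int.natCast_nonneg α), hmax]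
  exact_mod_cast hlt

/-- Dick. If `Q ⊂ [0,1)^{αs}` is an order `1` digital `(t',m,αs)`-net
over `F_b` with `0 ≤ t' ≤ m`, then the digital net `P ⊂ [0,1)^s` obtained by digit
interlacing composition with factor `α` is an order `α` digital `(t,m,s)`-net over `F_b`
with `t = α·min{m, t' + ⌊s(α-1)/2⌋}`; in particular
`μ_α(P) ≥ max{0, α(m - t' - ⌊s(α-1)/2⌋)} + 1`. -/
theorem interlaced_order_net
    (b s α m : ℕ) (hb : b.Prime) (hs : 0 < s) (hm : 0 < m) (hα : 2 ≤ α)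
    (t' : ℕ) (ht' : t' ≤ m)
    (C : Fin (α * s) → Matrix (Fin m) (Fin m) (ZMod b))
    (hQ : isOrderNet b 1 t' m C) :
    isOrderNet b α (α * min m (t' + s * (α - 1) / 2)) m (interlace α s m C) ∧
    ∀ k ∈ dualNet b (interlace α s m C), k ≠ 0 →
      max 0 ((α : ℤ) * ((m : ℤ) - (t' : ℤ) - ((s * (α - 1) / 2 : ℕ) : ℤ))) + 1
        ≤ (dickVec b α k : ℤ) :=
  interlaced_order_net_general hb.one_lt (by omega) hQ
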